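/- Let p, q ≥ 0 with n = p + q ≥ 2, J = I_{p,q} ∈ M_n(ℝ), and 𝔬(p,q) = {x ∈ M_n(ℝ) : xᵀJ + Jx = 0}. Let h, e, f ∈ 𝔬(p,q) be a standard 𝔰𝔩₂-triple, i.e., [h, e] = 2e, [h, f] = −2f, [e, f] = h, and assume e is distinguished, i.e., no nonzero semisimple (diagonalizable over ℂ) element of 𝔬(p,q) commutes with e. If v ∈ ℝⁿ satisfies e φ_v + φ_v e ∈ [𝔬(p,q), e], where φ_v = v vᵀ J, then v lies in the sum of the eigenspaces of h (as an endomorphism of ℝⁿ) corresponding to nonnegative eigenvalues. -/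

import Mathlib

/-!
Write `⟨u, w⟩ = uᵀ J w`. Pairing `e φ_v + φ_v e = [z, e]` under the trace with a matrix `c` that
commutes with `e` gives `⟨c e v, v⟩ = 0` (`form_comm_eq_zero`). The theorem follows from this by
choosing suitable `c`.

Let `x` be a lowest weight vector: `f x = 0` and `h x = -m x` with `m ∈ ℕ`; then `e ^ (m+1) x = 0`.
Since `e` is skew, the operator `R u = ∑_{j ≤ m} (-1)^j ⟨e ^ (m-j) x, u⟩ e ^ j x` commutes with
`e`. For `2 i > m`, taking `c = e ^ (2i-m-1) R` yields
`∑_j (-1)^j ⟨e ^ (m-j) x, v⟩ ⟨e ^ (2i-m+j) x, v⟩ = 0`, where the two exponents add up to `2 i`.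
By downward induction on `i` only the term with both exponents equal to `i` survives, so
`⟨e ^ i x, v⟩² = 0` (`form_pow_apply_eq_zero`). Thus `v` is orthogonal to every vector `e ^ i x` of
positive weight.

The vectors `e ^ i x` span the whole space (`span_strings_eq_top`). This rests on the identity
`e ^ (k+1) f = f e ^ (k+1) + (k+1) e ^ k (h + k)`: it shows that `h` satisfies the polynomial
`∏_{i < k} (X + i)` at every `u` with `e f u = 0` and `e ^ k u = 0` (`aeval_stringPoly`), whence `h`
is diagonalizable on `ker f` with eigenvalues in `-ℕ`, and `ker f ∩ im e = 0` because the
polynomials arising on the two sides are coprime; a dimension count then gives `V = ker f + im e`.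

Finally write `v = w + w'` with `w` of nonnegative and `w'` of negative weights. As `h` is skew,
weight spaces pair trivially unless their weights are opposite, so `w'` is orthogonal to all
`e ^ i x`, and `w' = 0` by nondegeneracy.
-/

open Matrix

noncomputable section

/-- The matrix `I_{p,q}`, with first `p` diagonal entries `1` and last `q` diagonal
entries `-1`. -/
def Ipq (p q : ℕ) (R : Type*) [Ring R] : Matrix (Fin (p + q)) (Fin (p + q)) R :=
  Matrix.diagonal fun i => if (i : ℕ) < p then 1 else -1

/-- Membership in the Lie algebra `𝔬(p,q)`. -/
def MemOpq (p q : ℕ) (x : Matrix (Fin (p + q)) (Fin (p + q)) ℝ) : Prop :=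
  xᵀ * Ipq p q ℝ + Ipq p q ℝ * x = 0

/-- A real matrix is semisimple if it is diagonalizable over `ℂ`. -/
def IsSemisimpleMat {n : ℕ} (h : Matrix (Fin n) (Fin n) ℝ) : Prop :=
  ∃ (P : Matrix (Fin n) (Fin n) ℂ) (d : Fin n → ℂ),
    IsUnit P.det ∧ h.map (algebraMap ℝ ℂ) = P * Matrix.diagonal d * P⁻¹

open Polynomial

/-! ### Polynomial identities for `𝔰𝔩₂`-triples -/

section Sl2

variable {V : Type*} [AddCommGroup V] [Module ℝ V]

/-- The commutation relations of a standard `𝔰𝔩₂`-triple of endomorphisms. Unlike Mathlib's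
`IsSl2Triple`, the zero triple is allowed. -/
structure Sl2Rel (h e f : Module.End ℝ V) : Prop where
  he : h * e - e * h = (2 : ℝ) • e
  hf : h * f - f * h = (-2 : ℝ) • f
  ef : e * f - f * e = h

namespace Sl2Rel

variable {h e f : Module.End ℝ V}

/-- The relations are invariant under the Weyl reflection. -/
theorem mirror (t : Sl2Rel h e f) : Sl2Rel (-h) f e where
  he := by
    rw [neg_mul, mul_neg, neg_sub_neg, ← neg_sub, t.hf]; module
  hf := by
    rw [neg_mul, mul_neg, neg_sub_neg, ← neg_sub, t.he]; module
  ef := by rw [← t.ef]; abel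

theorem h_e_apply (t : Sl2Rel h e f) (u : V) : h (e u) = e (h u) + (2 : ℝ) • e u := by
  have := LinearMap.congr_fun t.he u
  simp only [LinearMap.sub_apply, Module.End.mul_apply, LinearMap.smul_apply] at this
  rw [← this]; abel

theorem h_f_apply (t : Sl2Rel h e f) (u : V) : h (f u) = f (h u) - (2 : ℝ) • f u := by
  have := LinearMap.congr_fun t.hf u
  simp only [LinearMap.sub_apply, Module.End.mul_apply, LinearMap.smul_apply] at this
  rw [sub_eq_add_neg, ← neg_smul, ← this]; abel

theorem e_f_apply (t : Sl2Rel h e f) (u : V) : e (f u) = f (e u) + h u := by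
  have := LinearMap.congr_fun t.ef u
  simp only [LinearMap.sub_apply, Module.End.mul_apply] at this
  rw [← this]; abel

theorem h_pow_e_apply (t : Sl2Rel h e f) (k : ℕ) (u : V) :
    h ((e ^ k) u) = (e ^ k) (h u) + (2 * k : ℝ) • (e ^ k) u := by
  induction k with
  | zero => simp
  | succ k ih =>
    rw [pow_succ', Module.End.mul_apply, Module.End.mul_apply, t.h_e_apply, ih]
    simp only [map_add, map_smul]
    push_cast
    module

theorem pow_e_f_apply (t : Sl2Rel h e f) (k : ℕ) (u : V) :
    (e ^ (k + 1)) (f u) =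
      f ((e ^ (k + 1)) u) + (k + 1 : ℝ) • (e ^ k) (h u + (k : ℝ) • u) := by
  induction k with
  | zero => simp [t.e_f_apply]
  | succ k ih =>
    rw [pow_succ' e (k + 1), Module.End.mul_apply, ih, Module.End.mul_apply, map_add,
      t.e_f_apply, t.h_pow_e_apply (k + 1) u, pow_succ' e k]
    simp only [map_add, map_smul, Module.End.mul_apply]
    push_cast
    module

/-- The polynomial `∏_{i < k} (X + i)`, whose roots are `0, -1, …, -(k-1)`. -/
def stringPoly (k : ℕ) : ℝ[X] := ∏ i ∈ Finset.range k, (X - C (-(i : ℝ)))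

/-- With `f u = 0` this bounds the weights of lowest weight vectors; the weaker hypothesis
`e (f u) = 0` is what controls `ker e ∩ im f`. -/
theorem aeval_stringPoly (t : Sl2Rel h e f) (k : ℕ) (u : V) (h1 : e (f u) = 0)
    (h2 : (e ^ k) u = 0) : aeval h (stringPoly k) u = 0 := by
  induction k generalizing u with
  | zero =>
    have : u = 0 := by simpa using h2
    simp [this]
  | succ k ih =>
    have key := t.pow_e_f_apply k u
    rw [h2, map_zero, zero_add, pow_succ, Module.End.mul_apply, h1, map_zero] at key
    have hk : (k + 1 : ℝ) ≠ 0 := by positivity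
    have key' : (e ^ k) (h u + (k : ℝ) • u) = 0 :=
      (smul_eq_zero.mp key.symm).resolve_left hk
    have hcomm : e (f (h u)) = h (e (f u)) := by
      rw [t.h_e_apply, t.h_f_apply]
      simp
    have := ih (h u + (k : ℝ) • u) (by simp [hcomm, h1]) key'
    rw [stringPoly, Finset.prod_range_succ, ← stringPoly, map_mul, Module.End.mul_apply]
    simpa [Module.algebraMap_end_apply, Nat.cast_smul_eq_nsmul] using this

variable [FiniteDimensional ℝ V]

/-- The nonzero powers of `e` are eigenvectors of `ad h` with distinct eigenvalues. -/
theorem e_nilpotent (t : Sl2Rel h e f) : ∃ N : ℕ, e ^ N = 0 := by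
  by_contra! hne
  let A : Module.End ℝ (Module.End ℝ V) := LinearMap.mulLeft ℝ h - LinearMap.mulRight ℝ h
  have hA (k : ℕ) : A.HasEigenvalue (2 * k : ℝ) := by
    refine Module.End.hasEigenvalue_of_hasEigenvector (x := e ^ k) ⟨?_, hne k⟩
    rw [Module.End.mem_eigenspace_iff]
    ext u
    simp [A, t.h_pow_e_apply]
  have hfin : Set.Finite {μ | A.HasEigenvalue μ} := Module.End.finite_hasEigenvalue A
  refine Set.infinite_of_injective_forall_mem (f := fun k : ℕ => (2 * k : ℝ)) ?_ hA hfin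
  intro a b hab
  simpa using hab

omit [FiniteDimensional ℝ V] in
theorem semiconj_aeval {a b g : Module.End ℝ V} (hg : g * a = b * g) (P : ℝ[X]) :
    g * aeval a P = aeval b P * g := by
  induction P using Polynomial.induction_on' with
  | add p q hp hq => simp [mul_add, add_mul, hp, hq]
  | monomial n r =>
    have : g * a ^ n = b ^ n * g := (SemiconjBy.pow_right (show SemiconjBy g a b from hg) n)
    rw [aeval_monomial, aeval_monomial, ← mul_assoc, ← Algebra.commutes, mul_assoc, this, mul_assoc]

/-! ### Spanning by strings through lowest weight vectors -/

/-- If `x = f u` and `e x = 0`, then `x` is killed both by a polynomial in `h` with negative roots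
and by one with nonnegative roots. -/
theorem disjoint_ker_range (t : Sl2Rel h e f) :
    Disjoint (LinearMap.ker e) (LinearMap.range f) := by
  rw [Submodule.disjoint_def]
  rintro _ hx ⟨u, rfl⟩
  rw [LinearMap.mem_ker] at hx
  obtain ⟨N, hN⟩ := t.e_nilpotent
  obtain ⟨M, hM⟩ := t.mirror.e_nilpotent
  have h1 := t.aeval_stringPoly N u hx (by simp [hN])
  have h2 := t.mirror.aeval_stringPoly M (f u) (by simp [hx]) (by simp [hM])
  have hsc : f * h = (h + algebraMap ℝ _ 2) * f := by
    ext u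
    simp [t.h_f_apply, Module.algebraMap_end_apply]
  have h3 : aeval h ((stringPoly N).comp (X + C 2)) (f u) = 0 := by
    have := LinearMap.congr_fun (semiconj_aeval hsc (stringPoly N)) u
    rw [Module.End.mul_apply, h1, map_zero, Module.End.mul_apply] at this
    rw [aeval_comp]
    simpa using this.symm
  have h4 : aeval h ((stringPoly M).comp (-X)) (f u) = 0 := by
    rw [aeval_comp]
    simpa using h2
  have hcop : IsCoprime ((stringPoly N).comp (X + C 2)) ((stringPoly M).comp (-X)) := by
    rw [stringPoly, stringPoly, prod_comp, prod_comp]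
    refine IsCoprime.prod_left fun i _ => IsCoprime.prod_right fun j _ => ?_
    have e1 : (X - C (-(i : ℝ))).comp (X + C 2) = X - C (-(i : ℝ) - 2) := by
      simp only [sub_comp, X_comp, C_comp, C_sub]
      ring
    have e2 : (X - C (-(j : ℝ))).comp (-X) = -(X - C (j : ℝ)) := by
      simp only [sub_comp, X_comp, C_comp, C_neg, neg_comp]
      ring
    rw [e1, e2, IsCoprime.neg_right_iff]
    refine isCoprime_X_sub_C_of_isUnit_sub (Ne.isUnit ?_)
    have : (0 : ℝ) ≤ i := Nat.cast_nonneg i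
    have : (0 : ℝ) ≤ j := Nat.cast_nonneg j
    intro hh
    linarith
  obtain ⟨a, b, hab⟩ := hcop
  have := congrArg (fun P => aeval h P (f u)) hab
  simpa [h3, h4] using this.symm

/-- Disjointness for the triple and its mirror image gives `rank e = rank f`, hence the dimension
count. -/
theorem ker_sup_range (t : Sl2Rel h e f) : LinearMap.ker f ⊔ LinearMap.range e = ⊤ := by
  refine Submodule.eq_top_of_disjoint _ _ ?_ t.mirror.disjoint_ker_range
  have h1 := Submodule.finrank_add_finrank_le_of_disjoint t.disjoint_ker_range
  have h2 := LinearMap.finrank_range_add_finrank_ker e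
  have h3 := LinearMap.finrank_range_add_finrank_ker f
  omega

/-- `x` is a lowest weight vector of weight `-m` (or zero). -/
def IsLowest (h f : Module.End ℝ V) (m : ℕ) (x : V) : Prop :=
  f x = 0 ∧ h x = (-(m : ℝ)) • x

/-- The vectors `e ^ i x`, with `x` a lowest weight vector. -/
def strings (h e f : Module.End ℝ V) : Set V :=
  {y | ∃ (m i : ℕ) (x : V), IsLowest h f m x ∧ y = (e ^ i) x}

omit [FiniteDimensional ℝ V] in
theorem h_pow_lowest (t : Sl2Rel h e f) {m : ℕ} {x : V} (hx : IsLowest h f m x) (i : ℕ) :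
    h ((e ^ i) x) = (2 * i - m : ℝ) • (e ^ i) x := by
  rw [t.h_pow_e_apply, hx.2, map_smul]
  module

theorem pow_lowest_eq_zero (t : Sl2Rel h e f) {m : ℕ} {x : V} (hx : IsLowest h f m x) :
    (e ^ (m + 1)) x = 0 := by
  obtain ⟨N, hN⟩ := t.e_nilpotent
  have hf : f ((e ^ (m + 1)) x) = 0 := by
    have := t.pow_e_f_apply m x
    rw [hx.1, hx.2] at this
    simpa using this.symm
  have h1 := t.aeval_stringPoly N ((e ^ (m + 1)) x) (by simp [hf]) (by simp [hN])
  -- A lowest weight vector has weight `≤ 0`, but this one has weight `m + 2`.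
  have hw := t.h_pow_lowest hx (m + 1)
  have h2 : aeval h (stringPoly N) ((e ^ (m + 1)) x)
      = (stringPoly N).eval (2 * ((m + 1 : ℕ) : ℝ) - m) • (e ^ (m + 1)) x := by
    by_cases h0 : (e ^ (m + 1)) x = 0
    · simp [h0]
    · exact Module.End.aeval_apply_of_hasEigenvector
        ⟨Module.End.mem_eigenspace_iff.mpr hw, h0⟩
  rw [h1] at h2
  refine (smul_eq_zero.mp h2.symm).resolve_left ?_
  rw [stringPoly, eval_prod, ← ne_eq, Finset.prod_ne_zero_iff]
  intro i _
  simp only [eval_sub, eval_X, eval_C]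
  push_cast
  have : (0 : ℝ) ≤ i := Nat.cast_nonneg i
  have : (0 : ℝ) ≤ m := Nat.cast_nonneg m
  intro hh
  linarith

omit [FiniteDimensional ℝ V] in
/-- A vector of `ker f` killed by a product of distinct linear factors in `h` is a sum of lowest
weight vectors; Bézout coefficients keep both summands inside `ker f`, which is `h`-stable. -/
theorem ker_aeval_le_span (t : Sl2Rel h e f) (k : ℕ) (x : V) (hx : f x = 0)
    (hk : aeval h (stringPoly k) x = 0) : x ∈ Submodule.span ℝ (strings h e f) := by
  have hinv (P : ℝ[X]) : f (aeval h P x) = 0 := by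
    have hsc : f * h = (h + algebraMap ℝ _ 2) * f := by
      ext u
      simp [t.h_f_apply, Module.algebraMap_end_apply]
    have := LinearMap.congr_fun (semiconj_aeval hsc P) x
    simpa [hx] using this
  induction k generalizing x with
  | zero =>
    have : x = 0 := by simpa [stringPoly] using hk
    rw [this]
    exact Submodule.zero_mem _
  | succ k ih =>
    have hcop : IsCoprime (stringPoly k) (X - C (-(k : ℝ))) := by
      refine IsCoprime.prod_left fun i hi => isCoprime_X_sub_C_of_isUnit_sub (Ne.isUnit ?_)
      have : i < k := Finset.mem_range.mp hi
      have : (i : ℝ) < k := by exact_mod_cast this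
      intro hh
      linarith
    rw [stringPoly, Finset.prod_range_succ, ← stringPoly] at hk
    obtain ⟨a, b, hab⟩ := hcop
    have hsplit : x = aeval h (a * stringPoly k) x + aeval h (b * (X - C (-(k : ℝ)))) x := by
      rw [← LinearMap.add_apply, ← map_add, hab]
      simp
    rw [hsplit]
    refine Submodule.add_mem _ (Submodule.subset_span ⟨k, 0, _, ⟨hinv _, ?_⟩, rfl⟩)
      (ih _ (hinv _) ?_ fun P => ?_)
    · have : aeval h ((X - C (-(k : ℝ))) * (a * stringPoly k)) x = 0 := by
        rw [show (X - C (-(k : ℝ))) * (a * stringPoly k)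
          = a * (stringPoly k * (X - C (-(k : ℝ)))) by ring, map_mul, Module.End.mul_apply, hk,
          map_zero]
      rw [map_mul, Module.End.mul_apply] at this
      simp only [map_sub, aeval_X, aeval_C, LinearMap.sub_apply,
        Module.algebraMap_end_apply] at this
      exact sub_eq_zero.mp this
    · rw [← Module.End.mul_apply, ← map_mul,
        show stringPoly k * (b * (X - C (-(k : ℝ))))
          = b * (stringPoly k * (X - C (-(k : ℝ)))) by ring, map_mul, Module.End.mul_apply, hk,
          map_zero]
    · rw [← Module.End.mul_apply (aeval h P), ← map_mul]
      exact hinv _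

theorem span_strings_eq_top (t : Sl2Rel h e f) : Submodule.span ℝ (strings h e f) = ⊤ := by
  obtain ⟨N, hN⟩ := t.e_nilpotent
  set U := Submodule.span ℝ (strings h e f) with hU
  have hker (x : V) (hx : f x = 0) : x ∈ U :=
    t.ker_aeval_le_span N x hx (t.aeval_stringPoly N x (by simp [hx]) (by simp [hN]))
  have heU (x : V) (hx : x ∈ U) : e x ∈ U := by
    induction hx using Submodule.span_induction with
    | mem y hy =>
      obtain ⟨m, i, x, hx, rfl⟩ := hy
      exact Submodule.subset_span ⟨m, i + 1, x, hx, by rw [pow_succ', Module.End.mul_apply]⟩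
    | zero => simp
    | add y z _ _ hy hz => rw [map_add]; exact U.add_mem hy hz
    | smul a y _ hy => rw [map_smul]; exact U.smul_mem a hy
  -- Iterating `V = ker f + e V` gives `V = U + e ^ k V` for all `k`.
  have hiter (k : ℕ) (x : V) : ∃ u ∈ U, ∃ y, x = u + (e ^ k) y := by
    induction k generalizing x with
    | zero => exact ⟨0, U.zero_mem, x, by simp⟩
    | succ k ih =>
      have hx : x ∈ LinearMap.ker f ⊔ LinearMap.range e := by
        rw [t.ker_sup_range]
        trivial
      obtain ⟨a, ha, _, ⟨b, rfl⟩, rfl⟩ := Submodule.mem_sup.mp hx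
      obtain ⟨u, hu, y, rfl⟩ := ih b
      refine ⟨a + e u, U.add_mem (hker a ha) (heU u hu), y, ?_⟩
      rw [map_add, pow_succ', Module.End.mul_apply, add_assoc]
  rw [eq_top_iff]
  intro x _
  obtain ⟨u, hu, y, rfl⟩ := hiter N x
  simpa [hN] using hu

/-! ### Operators commuting with `e` and orthogonality -/

/-- The operator `u ↦ ∑_{j ≤ m} (-1)^j B(e ^ (m-j) x, u) e ^ j x`. -/
def stringOp (B : LinearMap.BilinForm ℝ V) (e : Module.End ℝ V) (m : ℕ) (x : V) :
    Module.End ℝ V :=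
  ∑ j ∈ Finset.range (m + 1), (-1 : ℝ) ^ j • (B ((e ^ (m - j)) x)).smulRight ((e ^ j) x)

omit [FiniteDimensional ℝ V] in
theorem stringOp_apply (B : LinearMap.BilinForm ℝ V) (m : ℕ) (x u : V) :
    stringOp B e m x u =
      ∑ j ∈ Finset.range (m + 1), ((-1 : ℝ) ^ j * B ((e ^ (m - j)) x) u) • (e ^ j) x := by
  simp [stringOp, LinearMap.sum_apply, mul_smul]

omit [FiniteDimensional ℝ V] in
theorem stringOp_comm (B : LinearMap.BilinForm ℝ V) (hB : ∀ a b, B (e a) b = -B a (e b))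
    {m : ℕ} {x : V} (hx : (e ^ (m + 1)) x = 0) (u : V) :
    stringOp B e m x (e u) = e (stringOp B e m x u) := by
  -- Both sides equal the same sum over `j ≤ m + 1`, whose two end terms vanish.
  have h1 : stringOp B e m x (e u) = -∑ j ∈ Finset.range (m + 2),
      ((-1 : ℝ) ^ j * B ((e ^ (m + 1 - j)) x) u) • (e ^ j) x := by
    rw [Finset.sum_range_succ _ (m + 1), hx, smul_zero, add_zero, stringOp_apply,
      ← Finset.sum_neg_distrib]
    refine Finset.sum_congr rfl fun j hj => ?_
    have hj' : m + 1 - j = (m - j) + 1 := by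
      have := Finset.mem_range.mp hj
      omega
    rw [hj', pow_succ' e (m - j), Module.End.mul_apply, hB]
    module
  have h2 : e (stringOp B e m x u) = -∑ j ∈ Finset.range (m + 2),
      ((-1 : ℝ) ^ j * B ((e ^ (m + 1 - j)) x) u) • (e ^ j) x := by
    rw [Finset.sum_range_succ' _ (m + 1), Nat.sub_zero, hx, map_zero, LinearMap.zero_apply,
      mul_zero, zero_smul, add_zero, stringOp_apply, map_sum, ← Finset.sum_neg_distrib]
    refine Finset.sum_congr rfl fun j _ => ?_
    rw [Nat.add_sub_add_right, map_smul, pow_succ' e j, Module.End.mul_apply, pow_succ]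
    module
  rw [h1, h2]

/-- `v` is orthogonal to the vectors of positive weight in the string through `x`; the parameter
`d` only drives the downward induction on `i`. -/
theorem form_pow_apply_eq_zero (t : Sl2Rel h e f) (B : LinearMap.BilinForm ℝ V)
    (hB : ∀ a b, B (e a) b = -B a (e b)) {v : V}
    (hv : ∀ c : Module.End ℝ V, c * e = e * c → B (c (e v)) v = 0)
    {m : ℕ} {x : V} (hx : IsLowest h f m x) (d i : ℕ) (hi : m < 2 * i) (hd : m + 1 ≤ i + d) :
    B ((e ^ i) x) v = 0 := by
  have htop := t.pow_lowest_eq_zero hx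
  have hbig (i : ℕ) (hi : m + 1 ≤ i) : B ((e ^ i) x) v = 0 := by
    obtain ⟨k, rfl⟩ := Nat.exists_eq_add_of_le' hi
    rw [pow_add, Module.End.mul_apply, htop]
    simp
  induction d generalizing i with
  | zero => exact hbig i hd
  | succ d ih =>
    by_cases him : m + 1 ≤ i
    · exact hbig i him
    have hgt (i' : ℕ) (h' : i < i') : B ((e ^ i') x) v = 0 := ih i' (by omega) (by omega)
    have hR : stringOp B e m x * e = e * stringOp B e m x :=
      LinearMap.ext (stringOp_comm B hB htop)
    have hc := hv (e ^ (2 * i - m - 1) * stringOp B e m x) (by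
      rw [mul_assoc, hR, ← mul_assoc, ← mul_assoc, ← pow_succ, pow_succ'])
    rw [Module.End.mul_apply, stringOp_comm B hB htop, ← Module.End.mul_apply, ← pow_succ,
      stringOp_apply, map_sum, map_sum, LinearMap.sum_apply,
      Finset.sum_eq_single (m - i)] at hc
    · have e1 : m - (m - i) = i := by omega
      rw [map_smul, ← Module.End.mul_apply, ← pow_add, map_smul, LinearMap.smul_apply, e1,
        show 2 * i - m - 1 + 1 + (m - i) = i by omega, smul_eq_mul, mul_assoc] at hc
      have hs : ((-1 : ℝ) ^ (m - i)) ≠ 0 := pow_ne_zero _ (by norm_num)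
      exact mul_self_eq_zero.mp ((mul_eq_zero.mp hc).resolve_left hs)
    · intro j hj hne
      have := Finset.mem_range.mp hj
      rw [map_smul, ← Module.End.mul_apply, ← pow_add, map_smul, LinearMap.smul_apply]
      rcases lt_or_gt_of_ne hne with hlt | hlt
      · rw [hgt (m - j) (by omega)]
        simp
      · rw [hgt (2 * i - m - 1 + 1 + j) (by omega)]
        simp
    · intro hj
      exact absurd (Finset.mem_range.mpr (by omega)) hj

theorem mem_iSup_eigenspace (t : Sl2Rel h e f) (B : LinearMap.BilinForm ℝ V)
    (hnd : ∀ w, (∀ u, B u w = 0) → w = 0)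
    (hBh : ∀ a b, B (h a) b = -B a (h b)) (hBe : ∀ a b, B (e a) b = -B a (e b)) {v : V}
    (hv : ∀ c : Module.End ℝ V, c * e = e * c → B (c (e v)) v = 0) :
    v ∈ ⨆ (c : ℝ) (_ : 0 ≤ c), Module.End.eigenspace h c := by
  set P := ⨆ (c : ℝ) (_ : 0 ≤ c), Module.End.eigenspace h c with hP
  set Q := ⨆ (c : ℝ) (_ : c < 0), Module.End.eigenspace h c with hQ
  have hPQ : P ⊔ Q = ⊤ := by
    rw [eq_top_iff, ← t.span_strings_eq_top, Submodule.span_le]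
    rintro _ ⟨m, i, x, hx, rfl⟩
    have hw : (e ^ i) x ∈ Module.End.eigenspace h (2 * i - m : ℝ) :=
      Module.End.mem_eigenspace_iff.mpr (t.h_pow_lowest hx i)
    rcases le_or_gt (0 : ℝ) (2 * i - m : ℝ) with hc | hc
    · exact Submodule.mem_sup_left (Submodule.mem_iSup_of_mem _ (Submodule.mem_iSup_of_mem hc hw))
    · exact Submodule.mem_sup_right (Submodule.mem_iSup_of_mem _ (Submodule.mem_iSup_of_mem hc hw))
  have hort {a b : V} {α β : ℝ} (ha : h a = α • a) (hb : h b = β • b) (hab : α + β ≠ 0) :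
      B a b = 0 := by
    have := hBh a b
    rw [ha, hb] at this
    simp only [map_smul, LinearMap.smul_apply, smul_eq_mul] at this
    have h0 : (α + β) * B a b = 0 := by linarith
    exact (mul_eq_zero.mp h0).resolve_left hab
  have hv' : v ∈ P ⊔ Q := by
    rw [hPQ]
    trivial
  obtain ⟨w, hw, w', hw', hsum⟩ := Submodule.mem_sup.mp hv'
  have hzero : w' = 0 := by
    refine hnd w' fun u => ?_
    have hu : u ∈ Submodule.span ℝ (strings h e f) := by
      rw [t.span_strings_eq_top]
      trivial
    have hle : Submodule.span ℝ (strings h e f) ≤ LinearMap.ker (B.flip w') := by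
      rw [Submodule.span_le]
      rintro _ ⟨m, i, x, hx, rfl⟩
      have hwt := t.h_pow_lowest hx i
      rw [SetLike.mem_coe, LinearMap.mem_ker]
      change B ((e ^ i) x) w' = 0
      rcases le_or_gt (2 * i - m : ℝ) 0 with hc | hc
      · have : Q ≤ LinearMap.ker (B ((e ^ i) x)) := by
          refine iSup₂_le fun c hc' b hb => ?_
          exact hort hwt (Module.End.mem_eigenspace_iff.mp hb) (by linarith)
        exact this hw'
      · have hw0 : P ≤ LinearMap.ker (B ((e ^ i) x)) := by
          refine iSup₂_le fun c hc' b hb => ?_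
          exact hort hwt (Module.End.mem_eigenspace_iff.mp hb) (by linarith)
        have h1 : B ((e ^ i) x) w = 0 := hw0 hw
        have hmi : m < 2 * i := by
          have : (m : ℝ) < 2 * i := by linarith
          exact_mod_cast this
        have h2 := t.form_pow_apply_eq_zero B hBe hv hx (m + 1) i hmi (by omega)
        rw [← hsum, map_add, h1, zero_add] at h2
        exact h2
    exact hle hu
  rw [← hsum, hzero, add_zero]
  exact hw

end Sl2Rel

end Sl2

/-! ### The form defined by `I_{p,q}` -/

section MatrixForm

variable {p q : ℕ}

theorem Ipq_mul_self : Ipq p q ℝ * Ipq p q ℝ = 1 := by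
  rw [Ipq, Matrix.diagonal_mul_diagonal, ← Matrix.diagonal_one]
  congr 1
  funext i
  split_ifs <;> norm_num

theorem toBilin_skew {x : Matrix (Fin (p + q)) (Fin (p + q)) ℝ} (hx : MemOpq p q x)
    (a b : Fin (p + q) → ℝ) :
    Matrix.toBilin' (Ipq p q ℝ) (Matrix.toLin' x a) b =
      -Matrix.toBilin' (Ipq p q ℝ) a (Matrix.toLin' x b) := by
  have h1 : xᵀ * Ipq p q ℝ = -(Ipq p q ℝ * x) := eq_neg_of_add_eq_zero_left hx
  rw [Matrix.toBilin'_apply', Matrix.toBilin'_apply', Matrix.toLin'_apply, Matrix.toLin'_apply,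
    ← Matrix.vecMul_transpose, ← Matrix.dotProduct_mulVec, Matrix.mulVec_mulVec, h1,
    Matrix.neg_mulVec, dotProduct_neg, Matrix.mulVec_mulVec]

/-- Pairing `e φ_v + φ_v e = [z, e]` under the trace with `c` in the centralizer of `e`. -/
theorem form_comm_eq_zero {J c e z : Matrix (Fin (p + q)) (Fin (p + q)) ℝ}
    {v : Fin (p + q) → ℝ} (hc : c * e = e * c)
    (hz : e * (Matrix.vecMulVec v v * J) + (Matrix.vecMulVec v v * J) * e = z * e - e * z) :
    v ⬝ᵥ (J * (c * e)) *ᵥ v = 0 := by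
  set φ := Matrix.vecMulVec v v * J with hφ
  have hzero : (c * (z * e - e * z)).trace = 0 := by
    rw [mul_sub, Matrix.trace_sub, ← mul_assoc, ← mul_assoc, Matrix.trace_mul_comm (c * z) e,
      ← mul_assoc, ← hc, sub_self]
  have hφtr : (φ * (c * e)).trace = v ⬝ᵥ (J * (c * e)) *ᵥ v := by
    rw [hφ, mul_assoc, Matrix.vecMulVec_mul, Matrix.trace_vecMulVec, dotProduct_comm,
      ← Matrix.dotProduct_mulVec]
  rw [← hz, mul_add, Matrix.trace_add, ← mul_assoc, Matrix.trace_mul_comm (c * e) φ,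
    Matrix.trace_mul_comm c (φ * e), mul_assoc φ e c, ← hc, hφtr] at hzero
  linarith

end MatrixForm

/-- Let `h, e, f ∈ 𝔬(p,q)` be a standard `𝔰𝔩₂`-triple with `e`
distinguished. If `v ∈ ℝⁿ` satisfies `e φ_v + φ_v e ∈ [𝔬(p,q), e]`, then `v` lies in the sum
of the eigenspaces of `h` with nonnegative eigenvalues. -/
theorem multiplicity_one_stmt13 (p q : ℕ) (hn : 2 ≤ p + q)
    (h e f : Matrix (Fin (p + q)) (Fin (p + q)) ℝ)
    (hhg : MemOpq p q h) (heg : MemOpq p q e) (hfg : MemOpq p q f)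
    (hhe : h * e - e * h = (2 : ℝ) • e)
    (hhf : h * f - f * h = (-2 : ℝ) • f)
    (hef : e * f - f * e = h)
    (hdist : ∀ s : Matrix (Fin (p + q)) (Fin (p + q)) ℝ,
      MemOpq p q s → s * e = e * s → IsSemisimpleMat s → s = 0)
    (v : Fin (p + q) → ℝ)
    (hv : ∃ z : Matrix (Fin (p + q)) (Fin (p + q)) ℝ,
        (zᵀ * Ipq p q ℝ + Ipq p q ℝ * z = 0) ∧
        e * (Matrix.vecMulVec v v * Ipq p q ℝ) + (Matrix.vecMulVec v v * Ipq p q ℝ) * e =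
          z * e - e * z) :
    v ∈ ⨆ (c : ℝ) (_ : 0 ≤ c), Module.End.eigenspace (Matrix.mulVecLin h) c := by
  obtain ⟨z, -, hz⟩ := hv
  have hmul (a b : Matrix (Fin (p + q)) (Fin (p + q)) ℝ) :
      Matrix.toLin' a * Matrix.toLin' b = Matrix.toLin' (a * b) := (Matrix.toLin'_mul a b).symm
  have t : Sl2Rel (Matrix.toLin' h) (Matrix.toLin' e) (Matrix.toLin' f) := by
    refine ⟨?_, ?_, ?_⟩
    · rw [hmul, hmul, ← map_sub, hhe, map_smul]
    · rw [hmul, hmul, ← map_sub, hhf, map_smul]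
    · rw [hmul, hmul, ← map_sub, hef]
  refine t.mem_iSup_eigenspace (Matrix.toBilin' (Ipq p q ℝ)) (fun w hw => ?_)
    (toBilin_skew hhg) (toBilin_skew heg) fun c hc => ?_
  · have hJw : Ipq p q ℝ *ᵥ w = 0 := by
      refine dotProduct_eq_zero _ fun u => ?_
      have := hw u
      rwa [Matrix.toBilin'_apply', dotProduct_comm] at this
    rw [← Matrix.one_mulVec w, ← Ipq_mul_self, ← Matrix.mulVec_mulVec, hJw, Matrix.mulVec_zero]
  · obtain ⟨c, rfl⟩ := Matrix.toLin'.surjective c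
    have hc' : c * e = e * c := by
      apply Matrix.toLin'.injective
      rw [Matrix.toLin'_mul, Matrix.toLin'_mul]
      exact hc
    have hJ : (Ipq p q ℝ)ᵀ = Ipq p q ℝ := Matrix.diagonal_transpose _
    have := form_comm_eq_zero hc' hz
    rw [Matrix.toBilin'_apply', Matrix.toLin'_apply, Matrix.toLin'_apply, Matrix.mulVec_mulVec,
      dotProduct_comm, ← hJ, Matrix.mulVec_transpose, ← Matrix.dotProduct_mulVec,
      Matrix.mulVec_mulVec]
    exact this
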